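/- Let n ≥ 2, let 1 < p < n, r, q ≥ 1, let β, γ be real and 0 < a ≤ 1 satisfy 1/r + γ/n = a(1/p - 1/n) + (1-a)(1/q + β/n), and let 1 ≤ q₁, q₂, q₃ ≤ ∞ satisfy 1/q₁ = a/q₂ + (1-a)/q₃. Set δ = -γ + (1-a)β and assume 0 ≤ δ ≤ a. Then there exists a constant C > 0 such that for every smooth compactly supported f : ℝⁿ → ℝ, ‖ |x|^{γ} f ‖_{r,q₁} ≤ C ‖ |∇f| ‖_{p,q₂}^{a} · ‖ |x|^{β} f ‖_{q,q₃}^{1-a}. -/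

import Mathlib

open MeasureTheory Set ENNReal

/-- The distribution function `μ_f(λ) = μ{x : |f x| > λ}` of a function. -/
noncomputable def distribFn {α : Type*} [MeasurableSpace α] (μ : Measure α)
    (f : α → ℝ) (l : ℝ≥0∞) : ℝ≥0∞ :=
  μ {x | l < ENNReal.ofReal |f x|}

/-- The decreasing rearrangement `f*(t) = inf {λ > 0 : μ_f(λ) ≤ t}`. -/
noncomputable def rearr {α : Type*} [MeasurableSpace α] (μ : Measure α)
    (f : α → ℝ) (t : ℝ) : ℝ≥0∞ :=
  sInf {l : ℝ≥0∞ | 0 < l ∧ distribFn μ f l ≤ ENNReal.ofReal t}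

/-- The Lorentz `L^{p,q}` (quasi)norm
`‖f‖_{p,q} = (∫₀^∞ (t^{1/p} f*(t))^q dt/t)^{1/q}` for `q < ∞`, and
`‖f‖_{p,∞} = sup_{t>0} t^{1/p} f*(t)`. -/
noncomputable def lorentz {α : Type*} [MeasurableSpace α] (μ : Measure α)
    (p q : ℝ≥0∞) (f : α → ℝ) : ℝ≥0∞ :=
  if q = ∞ then ⨆ t ∈ Ioi (0 : ℝ), ENNReal.ofReal t ^ p.toReal⁻¹ * rearr μ f t
  else (∫⁻ t in Ioi (0 : ℝ),
      (ENNReal.ofReal t ^ p.toReal⁻¹ * rearr μ f t) ^ q.toReal / ENNReal.ofReal t) ^ q.toReal⁻¹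

/-- The `L^q(dt/t)` functional on `(0,∞)`. -/
noncomputable def NN (q : ℝ≥0∞) (F : ℝ → ℝ≥0∞) : ℝ≥0∞ :=
  if q = ∞ then ⨆ t ∈ Ioi (0 : ℝ), F t
  else (∫⁻ t in Ioi (0 : ℝ), F t ^ q.toReal / ENNReal.ofReal t) ^ q.toReal⁻¹

theorem lorentz_eq_NN {α : Type*} [MeasurableSpace α] (μ : Measure α)
    (p q : ℝ≥0∞) (f : α → ℝ) :
    lorentz μ p q f = NN q (fun t => ENNReal.ofReal t ^ p.toReal⁻¹ * rearr μ f t) := rfl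

theorem NN_mono {q : ℝ≥0∞} {F G : ℝ → ℝ≥0∞} (h : ∀ t, 0 < t → F t ≤ G t) :
    NN q F ≤ NN q G := by
  unfold NN
  split_ifs with hq
  · exact iSup₂_mono fun t ht => h t ht
  · refine ENNReal.rpow_le_rpow (setLIntegral_mono' measurableSet_Ioi fun t ht => ?_) (by positivity)
    gcongr
    exact h t ht

theorem image_mul_Ioi {c : ℝ} (hc : 0 < c) : (fun x : ℝ => c * x) '' Ioi 0 = Ioi 0 := by
  ext y
  simp only [mem_image, mem_Ioi]
  constructor
  · rintro ⟨x, hx, rfl⟩; positivity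
  · intro hy
    exact ⟨y / c, by positivity, by field_simp⟩

theorem lint_scale {c : ℝ} (hc : 0 < c) (F : ℝ → ℝ≥0∞) :
    ∫⁻ t in Ioi (0 : ℝ), F (c * t) / ENNReal.ofReal t =
      ∫⁻ t in Ioi (0 : ℝ), F t / ENNReal.ofReal t := by
  have := lintegral_image_eq_lintegral_abs_deriv_mul (s := Ioi (0:ℝ)) (f := fun x => c * x)
    (f' := fun _ => c) measurableSet_Ioi
    (fun x _ => by simpa using ((hasDerivAt_id x).const_mul c).hasDerivWithinAt)
    (fun x _ y _ h => by simpa [hc.ne'] using h) (fun t => F t / ENNReal.ofReal t)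
  rw [image_mul_Ioi hc] at this
  rw [this]
  refine setLIntegral_congr_fun measurableSet_Ioi fun t ht => ?_
  have ht' : 0 < t := ht
  simp only [abs_of_pos hc]
  rw [ENNReal.ofReal_mul hc.le, div_eq_mul_inv, div_eq_mul_inv,
    ENNReal.mul_inv (Or.inl (by simpa using hc)) (Or.inl ENNReal.ofReal_ne_top)]
  rw [mul_left_comm, ← mul_assoc (ENNReal.ofReal c), ENNReal.mul_inv_cancel (by simpa using hc)
    ENNReal.ofReal_ne_top, one_mul]

theorem NN_scale {q : ℝ≥0∞} {c : ℝ} (hc : 0 < c) (F : ℝ → ℝ≥0∞) :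
    NN q (fun t => F (c * t)) = NN q F := by
  unfold NN
  split_ifs with hq
  · apply le_antisymm
    · refine iSup₂_le fun t ht => ?_
      have ht' : 0 < t := ht
      exact le_iSup₂_of_le (c * t) (show 0 < c * t by positivity) le_rfl
    · refine iSup₂_le fun t ht => ?_
      have ht' : 0 < t := ht
      refine le_iSup₂_of_le (t / c) (show 0 < t / c by positivity) ?_
      simp only [mul_div_cancel₀ _ hc.ne', le_refl]
  · rw [lint_scale hc (fun t => F t ^ q.toReal)]

theorem jensen_tsum {ι : Type*} [Countable ι] (c z : ι → ℝ≥0∞) {s : ℝ} (hs : 1 ≤ s) :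
    (∑' i, c i * z i) ^ s ≤ (∑' i, c i) ^ (s - 1) * ∑' i, c i * z i ^ s := by
  have hs0 : 0 < s := by linarith
  let _ : MeasurableSpace ι := ⊤
  have hinv : s⁻¹ ≤ 1 := inv_le_one_of_one_le₀ hs
  have := ENNReal.lintegral_mul_norm_pow_le (μ := (Measure.count : Measure ι)) (f := c)
    (g := fun i => c i * z i ^ s) (by fun_prop) (Measurable.aemeasurable (by fun_prop))
    (p := 1 - s⁻¹) (q := s⁻¹) (by linarith) (by positivity) (by ring)
  have e : ∀ i, c i ^ (1 - s⁻¹) * (c i * z i ^ s) ^ s⁻¹ = c i * z i := by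
    intro i
    rw [ENNReal.mul_rpow_of_nonneg _ _ (by positivity), ← mul_assoc,
      ← ENNReal.rpow_add_of_nonneg _ _ (by linarith) (by positivity), ← ENNReal.rpow_mul,
      mul_inv_cancel₀ hs0.ne']
    simp
  simp only [lintegral_count, e] at this
  calc _ ≤ _ := ENNReal.rpow_le_rpow this hs0.le
    _ = _ := by
      rw [ENNReal.mul_rpow_of_nonneg _ _ hs0.le, ← ENNReal.rpow_mul, ← ENNReal.rpow_mul,
        inv_mul_cancel₀ hs0.ne', sub_mul, inv_mul_cancel₀ hs0.ne']
      simp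

theorem NN_sum {ι : Type*} [Countable ι] {q : ℝ≥0∞} (hq : 1 ≤ q) {F G : ℝ → ℝ≥0∞}
    (hG : Measurable G) (c : ι → ℝ≥0∞) (σ : ι → ℝ) (hσ : ∀ i, 0 < σ i)
    (h : ∀ t, 0 < t → F t ≤ ∑' i, c i * G (σ i * t)) :
    NN q F ≤ (∑' i, c i) * NN q G := by
  refine (NN_mono h).trans ?_
  unfold NN
  split_ifs with hqt
  · refine iSup₂_le fun t ht => ?_
    rw [← ENNReal.tsum_mul_right]
    refine ENNReal.tsum_le_tsum fun i => ?_
    gcongr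
    have ht' : 0 < t := ht
    have := hσ i
    exact le_iSup₂_of_le (f := fun t _ => G t) (σ i * t) (show 0 < σ i * t by positivity) le_rfl
  · have hs : 1 ≤ q.toReal := by
      rw [← ENNReal.toReal_one]; exact ENNReal.toReal_mono hqt hq
    set s := q.toReal
    have hs0 : 0 < s := by linarith
    set S := ∑' i, c i
    set I := ∫⁻ t in Ioi (0 : ℝ), G t ^ s / ENNReal.ofReal t with hI
    have key : ∫⁻ t in Ioi (0 : ℝ), (∑' i, c i * G (σ i * t)) ^ s / ENNReal.ofReal t ≤
        S ^ s * I := by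
      calc _ ≤ ∫⁻ t in Ioi (0 : ℝ), S ^ (s - 1) *
            ∑' i, c i * (G (σ i * t) ^ s / ENNReal.ofReal t) := by
            refine lintegral_mono fun t => ?_
            calc _ ≤ (S ^ (s-1) * ∑' i, c i * G (σ i * t) ^ s) / ENNReal.ofReal t := by
                  gcongr
                  exact jensen_tsum _ _ hs
              _ = _ := by
                  rw [mul_div_assoc, div_eq_mul_inv, ← ENNReal.tsum_mul_right]
                  simp only [div_eq_mul_inv, mul_assoc]
        _ = S ^ (s - 1) * ∑' i, c i * I := by
            have hm : ∀ i, Measurable fun t => G (σ i * t) ^ s / ENNReal.ofReal t := by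
              intro i; 
              have : Measurable fun t => G (σ i * t) := hG.comp (measurable_const_mul _)
              fun_prop
            rw [lintegral_const_mul _ (by
              refine Measurable.tsum fun i => ?_
              exact (hm i).const_mul _)]
            rw [lintegral_tsum (fun i => ((hm i).const_mul _).aemeasurable)]
            congr 2
            ext i
            rw [lintegral_const_mul _ (hm i), lint_scale (hσ i) (fun t => G t ^ s)]
        _ = S ^ s * I := by
            rw [ENNReal.tsum_mul_right, ← mul_assoc]
            congr 1
            change S ^ (s - 1) * S = S ^ s
            nth_rewrite 2 [← ENNReal.rpow_one S]
            rw [← ENNReal.rpow_add_of_nonneg _ _ (by linarith) (by norm_num)]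
            congr 1; ring
    calc _ ≤ (S ^ s * I) ^ s⁻¹ := ENNReal.rpow_le_rpow key (by positivity)
      _ = _ := by
        rw [ENNReal.mul_rpow_of_nonneg _ _ (by positivity), ← ENNReal.rpow_mul,
          mul_inv_cancel₀ hs0.ne', ENNReal.rpow_one]

theorem NN_const_mul_le {q : ℝ≥0∞} (hq : 1 ≤ q) {F G : ℝ → ℝ≥0∞} (hG : Measurable G)
    (c : ℝ≥0∞) (h : ∀ t, 0 < t → F t ≤ c * G t) : NN q F ≤ c * NN q G := by
  have := NN_sum (ι := Unit) hq hG (fun _ => c) (fun _ => 1) (by simp) (F := F) (by simpa using h)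
  simpa using this

theorem NN_holder {a : ℝ} (ha0 : 0 < a) (ha1 : a ≤ 1) {q₁ q₂ q₃ : ℝ≥0∞}
    (hq₁ : 1 ≤ q₁) (hq₂ : 1 ≤ q₂) (hq₃ : 1 ≤ q₃)
    (hqrel : 1 / q₁ = ENNReal.ofReal a / q₂ + ENNReal.ofReal (1 - a) / q₃)
    {F G : ℝ → ℝ≥0∞} (hF : Measurable F) (hG : Measurable G) :
    NN q₁ (fun t => F t ^ a * G t ^ (1 - a)) ≤ NN q₂ F ^ a * NN q₃ G ^ (1 - a) := by
  rcases ha1.eq_or_lt with rfl | ha1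
  · have : q₁ = q₂ := by
      have : q₁⁻¹ = q₂⁻¹ := by simpa using hqrel
      exact inv_injective this
    subst this
    simp
  have hb0 : 0 < 1 - a := by linarith
  set b := 1 - a with hb
  have hsup : ∀ (H : ℝ → ℝ≥0∞) t, 0 < t → H t ≤ NN ∞ H := by
    intro H t ht
    simp only [NN, if_true]
    exact le_iSup₂_of_le (f := fun t _ => H t) t ht le_rfl
  have hpos : ∀ {q : ℝ≥0∞}, 1 ≤ q → q ≠ ∞ → 0 < q.toReal := fun h1 h2 =>
    ENNReal.toReal_pos (by rintro rfl; simp at h1) h2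
  by_cases h1 : q₁ = ∞
  · subst h1
    have h := hqrel.symm
    simp [ENNReal.div_eq_zero_iff, ha0.not_ge, hb0.not_ge] at h
    obtain ⟨rfl, rfl⟩ := h
    conv_lhs => simp only [NN, if_true]
    refine iSup₂_le fun t ht => ?_
    gcongr <;> exact hsup _ _ ht
  have p1 := hpos hq₁ h1
  have hNN : ∀ (q : ℝ≥0∞) (H : ℝ → ℝ≥0∞), q ≠ ∞ → NN q H =
    (∫⁻ t in Ioi (0 : ℝ), H t ^ q.toReal / ENNReal.ofReal t) ^ q.toReal⁻¹ := by
    intro q H h; simp [NN, h]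
  by_cases h2 : q₂ = ∞
  · subst h2
    have h3 : q₃ ≠ ∞ := by
      rintro rfl
      simp at hqrel
      exact h1 hqrel
    have p3 := hpos hq₃ h3
    have e : q₁.toReal⁻¹ = b / q₃.toReal := by
      have := congrArg ENNReal.toReal hqrel
      simpa [hb0.le] using this
    have e' : b * q₁.toReal = q₃.toReal := by field_simp at e; linarith
    refine (NN_const_mul_le hq₁ (hG.pow_const b) (NN ∞ F ^ a) ?_).trans ?_
    · intro t ht
      gcongr
      exact hsup _ _ ht
    · gcongr
      rw [hNN _ _ h1, hNN _ _ h3, ← ENNReal.rpow_mul, e]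
      simp only [← ENNReal.rpow_mul, e']
      apply le_of_eq; congr 1; ring
  have p2 := hpos hq₂ h2
  by_cases h3 : q₃ = ∞
  · subst h3
    have e : q₁.toReal⁻¹ = a / q₂.toReal := by
      have := congrArg ENNReal.toReal hqrel
      simpa [ha0.le] using this
    have e' : a * q₁.toReal = q₂.toReal := by field_simp at e; linarith
    refine (NN_const_mul_le hq₁ (hF.pow_const a) (NN ∞ G ^ b) ?_).trans ?_
    · intro t ht
      rw [mul_comm]
      gcongr
      exact hsup _ _ ht
    · rw [mul_comm]
      gcongr
      rw [hNN _ _ h1, hNN _ _ h2, ← ENNReal.rpow_mul, e]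
      simp only [← ENNReal.rpow_mul, e']
      apply le_of_eq; congr 1; ring
  have p3 := hpos hq₃ h3
  have e : q₁.toReal⁻¹ = a / q₂.toReal + b / q₃.toReal := by
    have := congrArg ENNReal.toReal hqrel
    rw [ENNReal.toReal_add (ENNReal.div_ne_top (by simp) (by rintro rfl; simp at hq₂))
      (ENNReal.div_ne_top (by simp) (by rintro rfl; simp at hq₃))] at this
    simpa [ha0.le, hb0.le] using this
  rw [hNN _ _ h1, hNN _ _ h2, hNN _ _ h3]
  generalize q₁.toReal = s1 at *
  generalize q₂.toReal = s2 at *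
  generalize q₃.toReal = s3 at *
  have hsum : a * s1 / s2 + b * s1 / s3 = 1 := by
    have := congrArg (· * s1) e
    simp only [inv_mul_cancel₀ p1.ne'] at this
    rw [this]; ring
  have hmF : AEMeasurable (fun t => F t ^ s2 / ENNReal.ofReal t) (volume.restrict (Ioi (0:ℝ))) := by
    fun_prop
  have hmG : AEMeasurable (fun t => G t ^ s3 / ENNReal.ofReal t) (volume.restrict (Ioi (0:ℝ))) := by
    fun_prop
  have key := ENNReal.lintegral_mul_norm_pow_le hmF hmG (p := a * s1 / s2) (q := b * s1 / s3)
    (by positivity) (by positivity) hsum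
  have hpt : ∀ t, (F t ^ a * G t ^ b) ^ s1 / ENNReal.ofReal t =
    (F t ^ s2 / ENNReal.ofReal t) ^ (a * s1 / s2) * (G t ^ s3 / ENNReal.ofReal t) ^ (b * s1 / s3) := by
    intro t
    rw [ENNReal.div_rpow_of_nonneg _ _ (by positivity), ENNReal.div_rpow_of_nonneg _ _ (by positivity),
      ENNReal.mul_rpow_of_nonneg _ _ p1.le]
    simp only [← ENNReal.rpow_mul]
    rw [show s2 * (a * s1 / s2) = a * s1 by field_simp, show s3 * (b * s1 / s3) = b * s1 by field_simp]
    simp only [div_eq_mul_inv, ← ENNReal.inv_rpow]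
    rw [mul_mul_mul_comm, ← ENNReal.rpow_add_of_nonneg _ _ (by positivity) (by positivity)]
    simp only [div_eq_mul_inv] at hsum
    rw [hsum, ENNReal.rpow_one]
  calc _ ≤ _ := ENNReal.rpow_le_rpow (by simp only [hpt]; exact key) (by positivity)
    _ = _ := by
      rw [ENNReal.mul_rpow_of_nonneg _ _ (by positivity)]
      simp only [← ENNReal.rpow_mul]
      congr 2 <;> field_simp

section rearrangement
variable {α : Type*} [MeasurableSpace α] {μ : Measure α} {f : α → ℝ}

theorem distribFn_anti {l m : ℝ≥0∞} (h : l ≤ m) : distribFn μ f m ≤ distribFn μ f l :=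
  measure_mono fun _ hx => lt_of_le_of_lt h hx

theorem rearr_le {l : ℝ≥0∞} {t : ℝ} (h : distribFn μ f l ≤ ENNReal.ofReal t) :
    rearr μ f t ≤ l := by
  refine le_of_forall_gt fun m hm => ?_
  obtain ⟨k, hk1, hk2⟩ := exists_between hm
  refine lt_of_le_of_lt (sInf_le ⟨?_, (distribFn_anti hk1.le).trans h⟩) hk2
  exact lt_of_le_of_lt zero_le hk1

theorem distribFn_rearr (t : ℝ) : distribFn μ f (rearr μ f t) ≤ ENNReal.ofReal t := by
  have hne : {l : ℝ≥0∞ | 0 < l ∧ distribFn μ f l ≤ ENNReal.ofReal t}.Nonempty :=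
    ⟨∞, by simp [distribFn]⟩
  obtain ⟨u, hu, hut, hmem⟩ := exists_seq_tendsto_sInf hne (OrderBot.bddBelow _)
  have hsub : {x | rearr μ f t < ENNReal.ofReal |f x|} ⊆ ⋃ k, {x | u k < ENNReal.ofReal |f x|} := by
    intro x hx
    obtain ⟨k, hk⟩ := (hut.eventually_lt_const hx).exists
    exact mem_iUnion.2 ⟨k, hk⟩
  have hmono : Monotone fun k => {x | u k < ENNReal.ofReal |f x|} := by
    intro i j hij x hx
    exact lt_of_le_of_lt (hu hij) hx
  calc _ ≤ μ (⋃ k, {x | u k < ENNReal.ofReal |f x|}) := measure_mono hsub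
    _ = ⨆ k, μ {x | u k < ENNReal.ofReal |f x|} := hmono.measure_iUnion
    _ ≤ _ := iSup_le fun k => (hmem k).2

theorem lt_distribFn {l : ℝ≥0∞} {t : ℝ} (h : l < rearr μ f t) :
    ENNReal.ofReal t < distribFn μ f l := by
  by_contra! hc
  exact absurd (rearr_le hc) (not_le.2 h)

theorem rearr_anti : Antitone (rearr μ f) := fun s _ hst =>
  rearr_le ((distribFn_rearr s).trans (ENNReal.ofReal_le_ofReal hst))

theorem measurable_rearr : Measurable (rearr μ f) := rearr_anti.measurable

theorem setLIntegral_le_rearr (hf : Measurable f) {E : Set α}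
    {T : ℝ} (hT : 0 < T) (hET : μ E ≤ ENNReal.ofReal T) :
    ∫⁻ x in E, ENNReal.ofReal |f x| ∂μ ≤
      2 * ENNReal.ofReal T * ∑' j : ℕ, ENNReal.ofReal ((1/2) ^ j) * rearr μ f ((1/2) ^ j * T) := by
  set lam : ℕ → ℝ≥0∞ := fun j => rearr μ f ((1/2) ^ j * T) with hlam
  have hmeas : ∀ l : ℝ≥0∞, MeasurableSet {x | l < ENNReal.ofReal |f x|} := fun l =>
    measurableSet_lt measurable_const (by fun_prop)
  have hd : ∀ j, μ {x | lam j < ENNReal.ofReal |f x|} ≤ ENNReal.ofReal ((1/2) ^ j * T) :=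
    fun j => distribFn_rearr _
  have hnull : μ (⋂ j, {x | lam j < ENNReal.ofReal |f x|}) = 0 := by
    have hlim : Filter.Tendsto (fun j : ℕ => ENNReal.ofReal ((1/2 : ℝ) ^ j * T)) Filter.atTop (nhds 0) := by
      have : Filter.Tendsto (fun j : ℕ => (1/2 : ℝ) ^ j * T) Filter.atTop (nhds (0 * T)) :=
        (_root_.tendsto_pow_atTop_nhds_zero_of_lt_one (by norm_num) (by norm_num)).mul_const T
      simpa using ENNReal.tendsto_ofReal this
    refine le_antisymm (ge_of_tendsto' hlim fun j => ?_) zero_le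
    exact (measure_mono (iInter_subset _ j)).trans (hd j)
  have hae : ∀ᵐ x ∂(μ.restrict E), ENNReal.ofReal |f x| ≤ lam 0 +
      ∑' j : ℕ, indicator {x | lam j < ENNReal.ofReal |f x|} (fun _ => lam (j + 1)) x := by
    have : ∀ᵐ x ∂μ, x ∉ ⋂ j, {x | lam j < ENNReal.ofReal |f x|} := measure_eq_zero_iff_ae_notMem.1 hnull
    filter_upwards [ae_restrict_of_ae this] with x hx
    simp only [mem_iInter, mem_ofPred_eq, not_forall, not_lt] at hx
    classical
    by_cases h0 : Nat.find hx = 0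
    · have := Nat.find_spec hx
      rw [h0] at this
      exact this.trans le_self_add
    · obtain ⟨k, hk⟩ := Nat.exists_eq_succ_of_ne_zero h0
      have h1 := Nat.find_spec hx
      have h2 := Nat.find_min hx (m := k) (by omega)
      rw [hk] at h1
      refine le_trans ?_ le_add_self
      refine le_trans ?_ (ENNReal.le_tsum k)
      rw [indicator_of_mem (by simpa using h2)]
      exact h1
  calc _ ≤ ∫⁻ x in E, (lam 0 +
      ∑' j : ℕ, indicator {x | lam j < ENNReal.ofReal |f x|} (fun _ => lam (j + 1)) x) ∂μ :=
        lintegral_mono_ae hae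
    _ = lam 0 * μ E + ∑' j : ℕ, lam (j+1) * μ.restrict E {x | lam j < ENNReal.ofReal |f x|} := by
        rw [lintegral_add_left measurable_const, lintegral_tsum
          (fun j => (measurable_const.indicator (hmeas _)).aemeasurable)]
        simp [lintegral_indicator_const (hmeas _)]
    _ ≤ lam 0 * ENNReal.ofReal T + ∑' j : ℕ, lam (j+1) * ENNReal.ofReal ((1/2) ^ j * T) := by
        gcongr with j
        exact (Measure.restrict_apply_le _ _).trans (hd j)
    _ ≤ 2 * ENNReal.ofReal T * (ENNReal.ofReal ((1/2) ^ 0) * lam 0) +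
        ∑' j : ℕ, 2 * ENNReal.ofReal T * (ENNReal.ofReal ((1/2) ^ (j+1)) * lam (j+1)) := by
        gcongr ?_ + ∑' j, ?_ with j
        · simp only [pow_zero, ENNReal.ofReal_one, one_mul]
          rw [mul_comm]
          gcongr
          exact le_mul_of_one_le_left zero_le (by norm_num)
        · apply le_of_eq
          rw [← ENNReal.ofReal_ofNat 2, ← ENNReal.ofReal_mul (by norm_num), ← mul_assoc,
            ← ENNReal.ofReal_mul (by positivity), mul_comm]
          congr 2
          ring
    _ = _ := by
        rw [ENNReal.tsum_mul_left, ← mul_add]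
        congr 1
        rw [tsum_eq_zero_add' ENNReal.summable (f := fun j : ℕ => ENNReal.ofReal ((1/2) ^ j) * lam j)]

end rearrangement

theorem smoothTransition_deriv_zero_left {u : ℝ} (h : u ≤ 0) : deriv Real.smoothTransition u = 0 := by
  refine IsLocalMin.deriv_eq_zero (Filter.Eventually.of_forall fun v => ?_)
  rw [Real.smoothTransition.zero_of_nonpos h]
  exact Real.smoothTransition.nonneg v

theorem smoothTransition_deriv_zero_right {u : ℝ} (h : 1 ≤ u) : deriv Real.smoothTransition u = 0 := by
  refine IsLocalMax.deriv_eq_zero (Filter.Eventually.of_forall fun v => ?_)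
  rw [Real.smoothTransition.one_of_one_le h]
  exact Real.smoothTransition.le_one v

theorem smoothTransition_deriv_bound : ∃ M : ℝ, 0 < M ∧ ∀ u, |deriv Real.smoothTransition u| ≤ M := by
  have hc : Continuous (deriv Real.smoothTransition) :=
    (Real.smoothTransition.contDiff (n := 1)).continuous_deriv le_rfl
  obtain ⟨M, hM⟩ := (isCompact_Icc (a := (0:ℝ)) (b := 1)).exists_bound_of_continuousOn hc.continuousOn
  refine ⟨max M 1, by positivity, fun u => ?_⟩
  by_cases h0 : u ≤ 0
  · rw [smoothTransition_deriv_zero_left h0]; simp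
  by_cases h1 : 1 ≤ u
  · rw [smoothTransition_deriv_zero_right h1]; simp
  · exact (hM u ⟨by linarith, by linarith⟩).trans (le_max_left _ _)

theorem enorm_gradient {n : ℕ} (f : EuclideanSpace ℝ (Fin n) → ℝ) (x : EuclideanSpace ℝ (Fin n)) :
    ENNReal.ofReal |‖gradient f x‖| = ‖fderiv ℝ f x‖ₑ := by
  rw [abs_of_nonneg (norm_nonneg _), ofReal_norm]
  unfold gradient
  exact LinearIsometryEquiv.enorm_map _ _

theorem level_sobolev (n : ℕ) (hn : 2 ≤ n) : ∃ K : ℝ, 0 < K ∧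
    ∀ f : EuclideanSpace ℝ (Fin n) → ℝ, ContDiff ℝ (⊤ : ℕ∞) f → HasCompactSupport f →
    ∀ l₁ l₂ : ℝ, 0 ≤ l₁ → l₁ < l₂ →
      ENNReal.ofReal (l₂ - l₁) * distribFn volume f (ENNReal.ofReal l₂) ^ (1 - 1 / (n : ℝ)) ≤
        ENNReal.ofReal K * ∫⁻ x in {x | ENNReal.ofReal l₁ < ENNReal.ofReal |f x|},
          ENNReal.ofReal |‖gradient f x‖| := by
  obtain ⟨M, hM0, hM⟩ := smoothTransition_deriv_bound
  have hn' : (2:ℝ) ≤ n := by exact_mod_cast hn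
  have hfr : Module.finrank ℝ (EuclideanSpace ℝ (Fin n)) = n := by simp
  have hpos : 0 < 1 - 1 / (n:ℝ) := by
    rw [sub_pos, div_lt_one (by linarith)]; linarith
  set P : ℝ := (1 - 1 / (n:ℝ))⁻¹ with hP
  have hP0 : 0 < P := by positivity
  have hconj : Real.HolderConjugate (Module.finrank ℝ (EuclideanSpace ℝ (Fin n)) : ℝ) P := by
    rw [hfr, Real.holderConjugate_iff]
    refine ⟨by linarith, ?_⟩
    rw [hP]; simp
  set K0 := lintegralPowLePowLIntegralFDerivConst (volume : Measure (EuclideanSpace ℝ (Fin n))) P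
  refine ⟨((K0 : ℝ) + 1) ^ P⁻¹ * (2 * M), by positivity, ?_⟩
  intro f hf hsupp l₁ l₂ hl₁ hl
  have hD : 0 < l₂ ^ 2 - l₁ ^ 2 := by nlinarith
  set D := l₂ ^ 2 - l₁ ^ 2 with hDdef
  set u : EuclideanSpace ℝ (Fin n) → ℝ := fun x => Real.smoothTransition ((f x ^ 2 - l₁ ^ 2) / D) with hu
  have hf1 : ContDiff ℝ 1 f := hf.of_le (by exact_mod_cast le_top)
  have hu1 : ContDiff ℝ 1 u := by
    refine (Real.smoothTransition.contDiff (n := 1)).comp ?_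
    exact ((hf1.pow 2).sub contDiff_const).div_const _
  have husupp : HasCompactSupport u := by
    have : u = (fun y => Real.smoothTransition ((y ^ 2 - l₁ ^ 2) / D)) ∘ f := rfl
    rw [this]
    refine hsupp.comp_left ?_
    apply Real.smoothTransition.zero_of_nonpos
    apply div_nonpos_of_nonpos_of_nonneg _ hD.le
    nlinarith
  have hfd : ∀ x, fderiv ℝ u x =
      (deriv Real.smoothTransition ((f x ^ 2 - l₁ ^ 2) / D) * (2 * f x / D)) • fderiv ℝ f x := by
    intro x
    have h1 : HasDerivAt (fun y : ℝ => (y ^ 2 - l₁ ^ 2) / D) (2 * f x / D) (f x) := by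
      have := (((hasDerivAt_id (f x)).pow 2).sub_const (l₁ ^ 2)).div_const D
      simpa using this
    have h2 : HasDerivAt Real.smoothTransition
        (deriv Real.smoothTransition ((f x ^ 2 - l₁ ^ 2) / D)) ((f x ^ 2 - l₁ ^ 2) / D) :=
      ((Real.smoothTransition.contDiff (n := 1)).differentiable one_ne_zero _).hasDerivAt
    have h3 := h2.comp (f x) h1
    have h4 := h3.comp_hasFDerivAt x (hf1.differentiable one_ne_zero x).hasFDerivAt
    exact h4.fderiv
  have hbd : ∀ x, ‖fderiv ℝ u x‖ₑ ≤ ENNReal.ofReal (2 * M / (l₂ - l₁)) *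
      indicator {x | ENNReal.ofReal l₁ < ENNReal.ofReal |f x|} (fun x => ENNReal.ofReal |‖gradient f x‖|) x := by
    intro x
    rw [hfd, enorm_smul]
    by_cases hx : l₁ < |f x|
    · rw [indicator_of_mem (by
        show ENNReal.ofReal l₁ < ENNReal.ofReal |f x|
        rw [ENNReal.ofReal_lt_ofReal_iff_of_nonneg hl₁]; exact hx), enorm_gradient]
      gcongr
      rw [Real.enorm_eq_ofReal_abs]
      apply ENNReal.ofReal_le_ofReal
      by_cases hx2 : l₂ ≤ |f x|
      · rw [smoothTransition_deriv_zero_right]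
        · simp only [zero_mul, abs_zero]
          have : 0 < l₂ - l₁ := by linarith
          positivity
        · rw [le_div_iff₀ hD, one_mul, hDdef, ← sq_abs (f x)]
          have : l₂ ^ 2 ≤ |f x| ^ 2 := by gcongr; linarith
          linarith
      · push Not at hx2
        rw [abs_mul, abs_div, abs_mul, abs_two, abs_of_pos hD]
        calc _ ≤ M * (2 * l₂ / D) := by
              gcongr
              exact hM _
          _ ≤ _ := by
              have : 0 < l₂ - l₁ := by linarith
              have h5 : D = (l₂ - l₁) * (l₂ + l₁) := by rw [hDdef]; ring
              rw [h5, mul_div_assoc', div_le_div_iff₀ (h5 ▸ hD) this]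
              have : 0 ≤ 2 * M * (l₂ - l₁) * l₁ := by positivity
              nlinarith
    · rw [smoothTransition_deriv_zero_left]
      · simp
      · apply div_nonpos_of_nonpos_of_nonneg _ hD.le
        push Not at hx
        rw [← sq_abs (f x)]
        have : |f x| ^ 2 ≤ l₁ ^ 2 := by gcongr
        linarith
  have hset : MeasurableSet {x | ENNReal.ofReal l₁ < ENNReal.ofReal |f x|} :=
    measurableSet_lt measurable_const (by have := hf.continuous.measurable; fun_prop)
  have hset2 : MeasurableSet {x | ENNReal.ofReal l₂ < ENNReal.ofReal |f x|} :=
    measurableSet_lt measurable_const (by have := hf.continuous.measurable; fun_prop)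
  set I := ∫⁻ x in {x | ENNReal.ofReal l₁ < ENNReal.ofReal |f x|}, ENNReal.ofReal |‖gradient f x‖|
  have hint : ∫⁻ x, ‖fderiv ℝ u x‖ₑ ≤ ENNReal.ofReal (2 * M / (l₂ - l₁)) * I := by
    refine (lintegral_mono hbd).trans ?_
    rw [lintegral_const_mul' _ _ ENNReal.ofReal_ne_top, lintegral_indicator hset]
  have hcheb : distribFn volume f (ENNReal.ofReal l₂) ≤ ∫⁻ x, ‖u x‖ₑ ^ P := by
    unfold distribFn
    rw [← lintegral_indicator_one hset2]
    refine lintegral_mono fun x => ?_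
    by_cases hx : ENNReal.ofReal l₂ < ENNReal.ofReal |f x|
    · rw [indicator_of_mem (by exact hx)]
      have hx' : l₂ < |f x| := (ENNReal.ofReal_lt_ofReal_iff_of_nonneg (by linarith)).1 hx
      have : u x = 1 := by
        apply Real.smoothTransition.one_of_one_le
        rw [le_div_iff₀ hD, one_mul, hDdef, ← sq_abs (f x)]
        have : l₂ ^ 2 ≤ |f x| ^ 2 := by gcongr; linarith
        linarith
      simp [this]
    · rw [indicator_of_notMem (by exact hx)]
      exact zero_le
  have hgns := lintegral_pow_le_pow_lintegral_fderiv (volume : Measure (EuclideanSpace ℝ (Fin n)))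
    hu1 husupp hconj
  have hfin : distribFn volume f (ENNReal.ofReal l₂) ≤
      ENNReal.ofReal ((K0:ℝ) + 1) * (ENNReal.ofReal (2 * M / (l₂ - l₁)) * I) ^ P := by
    refine hcheb.trans (hgns.trans ?_)
    gcongr
    rw [← ENNReal.ofReal_coe_nnreal]
    exact ENNReal.ofReal_le_ofReal (by linarith)
  have hl' : 0 < l₂ - l₁ := by linarith
  rw [show 1 - 1 / (n:ℝ) = P⁻¹ by rw [hP, inv_inv]]
  calc _ ≤ ENNReal.ofReal (l₂ - l₁) *
        (ENNReal.ofReal ((K0:ℝ) + 1) * (ENNReal.ofReal (2 * M / (l₂ - l₁)) * I) ^ P) ^ P⁻¹ := by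
        gcongr
    _ = _ := by
        rw [ENNReal.mul_rpow_of_nonneg _ _ (by positivity), ← ENNReal.rpow_mul,
          mul_inv_cancel₀ hP0.ne', ENNReal.rpow_one, ENNReal.ofReal_rpow_of_nonneg (by positivity)
          (by positivity), ← mul_assoc, ← mul_assoc, ← ENNReal.ofReal_mul hl'.le,
          ← ENNReal.ofReal_mul (by positivity)]
        congr 2
        field_simp

theorem rearr_step (n : ℕ) (hn : 2 ≤ n) : ∃ K : ℝ, 0 < K ∧
    ∀ f : EuclideanSpace ℝ (Fin n) → ℝ, ContDiff ℝ (⊤ : ℕ∞) f → HasCompactSupport f →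
    ∀ t : ℝ, 0 < t → rearr volume f t ≤ rearr volume f (2 * t) +
      ENNReal.ofReal (K * t ^ (1 / (n:ℝ))) * ∑' j : ℕ, ENNReal.ofReal ((1/2) ^ j) *
        rearr volume (fun x => ‖gradient f x‖) ((1/2) ^ j * (2 * t)) := by
  obtain ⟨K, hK, h⟩ := level_sobolev n hn
  refine ⟨4 * K, by positivity, fun f hf hs t ht => ?_⟩
  set S := ∑' j : ℕ, ENNReal.ofReal ((1/2) ^ j) *
        rearr volume (fun x => ‖gradient f x‖) ((1/2) ^ j * (2 * t))
  have hf1 : ContDiff ℝ 1 f := hf.of_le (by exact_mod_cast le_top)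
  have hgm : Measurable fun x => ‖gradient f x‖ := by
    have : Continuous (gradient f) := by
      unfold gradient
      exact (LinearIsometryEquiv.continuous _).comp (hf1.continuous_fderiv one_ne_zero)
    exact this.norm.measurable
  by_contra! hc
  obtain ⟨m, hm1, hm2⟩ := exists_between hc
  have hmt : m ≠ ∞ := (lt_of_lt_of_le hm2 le_top).ne
  have hr : rearr volume f (2 * t) < m := lt_of_le_of_lt le_self_add hm1
  have hrt : rearr volume f (2 * t) ≠ ∞ := (lt_of_lt_of_le hr le_top).ne
  set l₁ := (rearr volume f (2 * t)).toReal with hl1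
  set l₂ := m.toReal with hl2
  have e1 : ENNReal.ofReal l₁ = rearr volume f (2 * t) := ENNReal.ofReal_toReal hrt
  have e2 : ENNReal.ofReal l₂ = m := ENNReal.ofReal_toReal hmt
  have hl : l₁ < l₂ := (ENNReal.toReal_lt_toReal hrt hmt).2 hr
  have key := h f hf hs l₁ l₂ ENNReal.toReal_nonneg hl
  have hI := setLIntegral_le_rearr (μ := volume) hgm (E := {x | ENNReal.ofReal l₁ < ENNReal.ofReal |f x|})
    (T := 2 * t) (by positivity) (by rw [e1]; exact distribFn_rearr _)
  have hn0 : (0:ℝ) < n := by exact_mod_cast (by omega : 0 < n)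
  have hn1 : (1:ℝ) ≤ n := by exact_mod_cast (by omega : 1 ≤ n)
  have hd : ENNReal.ofReal t ≤ distribFn volume f (ENNReal.ofReal l₂) := by
    rw [e2]; exact (lt_distribFn hm2).le
  have hpos : 0 ≤ 1 - 1 / (n:ℝ) := by
    rw [sub_nonneg, div_le_one hn0]; exact hn1
  have hchain : ENNReal.ofReal (l₂ - l₁) * ENNReal.ofReal (t ^ (1 - 1 / (n:ℝ))) ≤
      ENNReal.ofReal K * (2 * ENNReal.ofReal (2 * t) * S) := by
    rw [← ENNReal.ofReal_rpow_of_nonneg ht.le hpos]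
    calc _ ≤ _ := by gcongr
      _ ≤ _ := key
      _ ≤ _ := by gcongr
  have hle : ENNReal.ofReal (l₂ - l₁) ≤ ENNReal.ofReal (4 * K * t ^ (1 / (n:ℝ))) * S := by
    calc _ = ENNReal.ofReal (l₂ - l₁) * ENNReal.ofReal (t ^ (1 - 1 / (n:ℝ))) *
          ENNReal.ofReal (t ^ (1 / (n:ℝ) - 1)) := by
          rw [mul_assoc, ← ENNReal.ofReal_mul (by positivity), ← Real.rpow_add ht]
          simp
      _ ≤ ENNReal.ofReal K * (2 * ENNReal.ofReal (2 * t) * S) * ENNReal.ofReal (t ^ (1 / (n:ℝ) - 1)) := by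
          gcongr
      _ = _ := by
          rw [← ENNReal.ofReal_ofNat 2, ← ENNReal.ofReal_mul (by norm_num), ← mul_assoc,
            ← ENNReal.ofReal_mul hK.le, mul_right_comm, ← ENNReal.ofReal_mul (by positivity)]
          congr 2
          rw [Real.rpow_sub ht, Real.rpow_one]
          field_simp
          ring
  have : m ≤ rearr volume f (2 * t) + ENNReal.ofReal (4 * K * t ^ (1 / (n:ℝ))) * S := by
    calc m = ENNReal.ofReal l₁ + ENNReal.ofReal (l₂ - l₁) := by
          rw [← ENNReal.ofReal_add ENNReal.toReal_nonneg (by linarith), ← e2]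
          congr 1; ring
      _ ≤ _ := by rw [e1]; gcongr
  exact absurd this (not_le.2 hm1)

theorem rearr_sobolev (n : ℕ) (hn : 2 ≤ n) : ∃ K : ℝ, 0 < K ∧
    ∀ f : EuclideanSpace ℝ (Fin n) → ℝ, ContDiff ℝ (⊤ : ℕ∞) f → HasCompactSupport f →
    ∀ t : ℝ, 0 < t → rearr volume f t ≤ ∑' k : ℕ,
      ENNReal.ofReal (K * (2 ^ k * t) ^ (1 / (n:ℝ))) * ∑' j : ℕ, ENNReal.ofReal ((1/2) ^ j) *
        rearr volume (fun x => ‖gradient f x‖) ((1/2) ^ j * (2 * (2 ^ k * t))) := by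
  obtain ⟨K, hK, h⟩ := rearr_step n hn
  refine ⟨K, hK, fun f hf hs t ht => ?_⟩
  set B : ℕ → ℝ≥0∞ := fun k => ENNReal.ofReal (K * (2 ^ k * t) ^ (1 / (n:ℝ))) *
    ∑' j : ℕ, ENNReal.ofReal ((1/2) ^ j) *
        rearr volume (fun x => ‖gradient f x‖) ((1/2) ^ j * (2 * (2 ^ k * t))) with hB
  have hiter : ∀ N : ℕ, rearr volume f t ≤ rearr volume f (2 ^ N * t) + ∑ k ∈ Finset.range N, B k := by
    intro N
    induction N with
    | zero => simp
    | succ N ih =>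
      refine ih.trans ?_
      rw [Finset.sum_range_succ, add_comm (∑ k ∈ Finset.range N, B k), ← add_assoc]
      gcongr
      have := h f hf hs (2 ^ N * t) (by positivity)
      rw [pow_succ', mul_assoc]
      exact this
  have hfin : volume (tsupport f) < ∞ := IsCompact.measure_lt_top hs
  obtain ⟨N, hN⟩ := pow_unbounded_of_one_lt ((volume (tsupport f)).toReal / t) (one_lt_two (α := ℝ))
  have hzero : rearr volume f (2 ^ N * t) = 0 := by
    refine le_antisymm (rearr_le ?_) zero_le
    calc distribFn volume f 0 ≤ volume (tsupport f) := by
          refine measure_mono fun x hx => subset_tsupport f ?_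
          simp only [mem_ofPred_eq, ENNReal.ofReal_pos, abs_pos] at hx
          exact hx
      _ = ENNReal.ofReal (volume (tsupport f)).toReal := (ENNReal.ofReal_toReal hfin.ne).symm
      _ ≤ _ := by
          apply ENNReal.ofReal_le_ofReal
          rw [div_lt_iff₀ ht] at hN
          exact hN.le
  have := hiter N
  rw [hzero, zero_add] at this
  exact this.trans (ENNReal.sum_le_tsum _)

theorem lorentz_sobolev (n : ℕ) (hn : 2 ≤ n) {p : ℝ} (hp1 : 1 < p) (hpn : p < n)
    {q : ℝ≥0∞} (hq : 1 ≤ q) : ∃ C : ℝ≥0∞, C ≠ ∞ ∧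
    ∀ f : EuclideanSpace ℝ (Fin n) → ℝ, ContDiff ℝ (⊤ : ℕ∞) f → HasCompactSupport f →
    NN q (fun t => ENNReal.ofReal t ^ (1 / p - 1 / (n:ℝ)) * rearr volume f t) ≤
      C * NN q (fun t => ENNReal.ofReal t ^ p⁻¹ *
        rearr volume (fun x => ‖gradient f x‖) t) := by
  obtain ⟨K, hK, h⟩ := rearr_sobolev n hn
  have hn0 : (0:ℝ) < n := by linarith
  have hp0 : 0 < p := by linarith
  set x : ℝ := 2 ^ (1 / (n:ℝ) - 1 / p) with hx
  set y : ℝ := (1/2) ^ (1 - 1 / p) with hy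
  have hx0 : 0 < x := by positivity
  have hy0 : 0 < y := by positivity
  have hinv : 1 / (n:ℝ) < 1 / p := one_div_lt_one_div_of_lt hp0 hpn
  have hx1 : x < 1 := Real.rpow_lt_one_of_one_lt_of_neg (by norm_num) (by linarith)
  have hy1 : y < 1 := Real.rpow_lt_one (by norm_num) (by norm_num) (by
    rw [sub_pos, div_lt_one hp0]; exact hp1)
  set c : ℕ × ℕ → ℝ := fun i => K * 2 ^ (-(1/p)) * (x ^ i.1 * y ^ i.2) with hc
  have hcs : Summable c := by
    apply Summable.mul_left
    exact (summable_geometric_of_lt_one hx0.le hx1).mul_of_nonneg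
      (summable_geometric_of_lt_one hy0.le hy1) (fun k => by positivity) (fun k => by positivity)
  refine ⟨∑' i, ENNReal.ofReal (c i), hcs.tsum_ofReal_ne_top, fun f hf hs => ?_⟩
  refine NN_sum hq ?_ (fun i => ENNReal.ofReal (c i)) (fun i => (1/2) ^ i.2 * (2 * 2 ^ i.1))
    (fun i => by positivity) fun t ht => ?_
  · have := measurable_rearr (μ := volume) (f := fun x => ‖gradient f x‖)
    fun_prop
  · rw [ENNReal.tsum_prod']
    refine (mul_le_mul_right (h f hf hs t ht) _).trans ?_
    rw [← ENNReal.tsum_mul_left]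
    refine ENNReal.tsum_le_tsum fun k => ?_
    rw [← mul_assoc, ← ENNReal.tsum_mul_left]
    refine ENNReal.tsum_le_tsum fun j => ?_
    apply le_of_eq
    have e : (1/2 : ℝ) ^ j * (2 * (2 ^ k * t)) = (1/2) ^ j * (2 * 2 ^ k) * t := by ring
    simp only [e]
    generalize rearr volume (fun x => ‖gradient f x‖) ((1/2) ^ j * (2 * 2 ^ k) * t) = R
    rw [← mul_assoc, ← mul_assoc _ _ R]
    congr 1
    rw [ENNReal.ofReal_rpow_of_pos ht, ENNReal.ofReal_rpow_of_pos (by positivity),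
      ← ENNReal.ofReal_mul (by positivity), ← ENNReal.ofReal_mul (by positivity),
      ← ENNReal.ofReal_mul (by positivity)]
    congr 1
    simp only [hc, hx, hy]
    have h2k : (2:ℝ) ^ k = Real.exp (k * Real.log 2) := by
      rw [← Real.rpow_natCast, Real.rpow_def_of_pos (by norm_num)]; ring_nf
    have h2j : (1/2:ℝ) ^ j = Real.exp (- j * Real.log 2) := by
      rw [← Real.rpow_natCast, Real.rpow_def_of_pos (by norm_num)]
      simp only [one_div, Real.log_inv]; ring_nf
    rw [← Real.rpow_natCast (2 ^ _) k, ← Real.rpow_natCast ((1/2) ^ _) j, h2k, h2j]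
    obtain ⟨τ, rfl⟩ : ∃ τ, t = Real.exp τ := ⟨Real.log t, (Real.exp_log ht).symm⟩
    have h2 : (2:ℝ) = Real.exp (Real.log 2) := (Real.exp_log (by norm_num)).symm
    have h12 : (1/2:ℝ) = Real.exp (- Real.log 2) := by
      rw [Real.exp_neg, Real.exp_log (by norm_num)]; norm_num
    generalize Real.log 2 = L at *
    rw [h12, h2]
    simp only [← Real.exp_mul, ← Real.exp_add]
    have r1 : ∀ A B C : ℝ, A * (K * B) * C = K * (A * B * C) := fun A B C => by ring
    have r2 : ∀ A B C : ℝ, K * A * B * C = K * (A * B * C) := fun A B C => by ring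
    rw [r1, r2]
    simp only [← Real.exp_add]
    congr 2
    field_simp
    ring

theorem weight_distrib (n : ℕ) (hn : 2 ≤ n) {δ : ℝ} (hδ : 0 ≤ δ) : ∃ A : ℝ, 0 < A ∧
    ∀ t : ℝ, 0 < t → volume {x : EuclideanSpace ℝ (Fin n) | A * t ^ (-δ / n) < ‖x‖ ^ (-δ)} ≤
      ENNReal.ofReal t := by
  rcases hδ.eq_or_lt with rfl | hδ
  · exact ⟨1, one_pos, fun t ht => by simp⟩
  have hn0 : (0:ℝ) < n := by exact_mod_cast (by omega : 0 < n)
  set V := (volume (Metric.ball (0 : EuclideanSpace ℝ (Fin n)) 1)).toReal with hV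
  have hVt : volume (Metric.ball (0 : EuclideanSpace ℝ (Fin n)) 1) ≠ ∞ := measure_ball_lt_top.ne
  have hV0 : 0 < V := ENNReal.toReal_pos (Metric.measure_ball_pos _ _ one_pos).ne' hVt
  refine ⟨(V⁻¹) ^ (-δ / n), by positivity, fun t ht => ?_⟩
  set R : ℝ := (V⁻¹ * t) ^ (1 / (n:ℝ)) with hR
  have hR0 : 0 < R := by positivity
  have hsub : {x : EuclideanSpace ℝ (Fin n) | (V⁻¹) ^ (-δ / n) * t ^ (-δ / n) < ‖x‖ ^ (-δ)} ⊆
      Metric.ball 0 R := by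
    intro x hx
    rw [mem_ofPred_eq, ← Real.mul_rpow (by positivity) ht.le] at hx
    rw [mem_ball_zero_iff]
    by_contra! hc
    have h1 : ‖x‖ ^ (-δ) ≤ R ^ (-δ) := Real.rpow_le_rpow_of_nonpos hR0 hc (by linarith)
    have h2 : R ^ (-δ) = (V⁻¹ * t) ^ (-δ / n) := by
      rw [hR, ← Real.rpow_mul (by positivity)]; congr 1; ring
    linarith
  refine (measure_mono hsub).trans ?_
  rw [Measure.addHaar_ball_of_pos _ _ hR0, finrank_euclideanSpace_fin,
    ← ENNReal.ofReal_toReal hVt, ← hV, ← ENNReal.ofReal_mul (by positivity)]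
  apply ENNReal.ofReal_le_ofReal
  rw [hR, ← Real.rpow_natCast, ← Real.rpow_mul (by positivity), one_div_mul_cancel hn0.ne',
    Real.rpow_one]
  field_simp
  exact le_rfl

theorem pointwise_bound {N F γ β a : ℝ} (hN : 0 < N) (ha1 : a ≤ 1) :
    ENNReal.ofReal |N ^ γ * F| ≤ ENNReal.ofReal (N ^ (-(-γ + (1 - a) * β))) *
      (ENNReal.ofReal |F| ^ a * ENNReal.ofReal |N ^ β * F| ^ (1 - a)) := by
  by_cases hF : F = 0
  · simp [hF]
  have hF' : 0 < |F| := abs_pos.2 hF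
  rw [abs_mul, abs_mul, abs_of_pos (Real.rpow_pos_of_pos hN _), abs_of_pos (Real.rpow_pos_of_pos hN _),
    ENNReal.ofReal_rpow_of_pos hF', ENNReal.ofReal_rpow_of_pos (by positivity),
    ← ENNReal.ofReal_mul (by positivity), ← ENNReal.ofReal_mul (by positivity)]
  apply le_of_eq
  congr 1
  rw [Real.mul_rpow (by positivity) hF'.le, ← Real.rpow_mul hN.le]
  have : N ^ γ * |F| = (N ^ (-(-γ + (1 - a) * β)) * N ^ (β * (1 - a))) * (|F| ^ a * |F| ^ (1 - a)) := by
    rw [← Real.rpow_add hN, ← Real.rpow_add hF']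
    congr 1
    · congr 1; ring
    · simp
  rw [this]; ring

theorem rearr_product (n : ℕ) (hn : 2 ≤ n) {β γ a : ℝ} (ha0 : 0 < a) (ha1 : a ≤ 1)
    (hδ0 : 0 ≤ -γ + (1 - a) * β) : ∃ A : ℝ, 0 < A ∧
    ∀ f : EuclideanSpace ℝ (Fin n) → ℝ, ∀ t : ℝ, 0 < t →
      rearr volume (fun x => ‖x‖ ^ γ * f x) (3 * t) ≤
        ENNReal.ofReal (A * t ^ (-(-γ + (1 - a) * β) / n)) *
          (rearr volume f t ^ a * rearr volume (fun x => ‖x‖ ^ β * f x) t ^ (1 - a)) := by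
  obtain ⟨A, hA, h⟩ := weight_distrib n hn hδ0
  refine ⟨A, hA, fun f t ht => rearr_le ?_⟩
  set δ := -γ + (1 - a) * β with hδ
  set S₁ := {x : EuclideanSpace ℝ (Fin n) | A * t ^ (-δ / n) < ‖x‖ ^ (-δ)}
  set S₂ := {x : EuclideanSpace ℝ (Fin n) | rearr volume f t < ENNReal.ofReal |f x|}
  set S₃ := {x : EuclideanSpace ℝ (Fin n) | rearr volume (fun x => ‖x‖ ^ β * f x) t <
    ENNReal.ofReal |‖x‖ ^ β * f x|}
  have hsub : {x : EuclideanSpace ℝ (Fin n) | ENNReal.ofReal (A * t ^ (-δ / n)) *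
          (rearr volume f t ^ a * rearr volume (fun x => ‖x‖ ^ β * f x) t ^ (1 - a)) <
          ENNReal.ofReal |‖x‖ ^ γ * f x|} ⊆ {0} ∪ (S₁ ∪ (S₂ ∪ S₃)) := by
    intro x hx
    by_contra hc
    simp only [mem_union, not_or, mem_singleton_iff] at hc
    obtain ⟨h0, h1, h2, h3⟩ := hc
    have h1' : ‖x‖ ^ (-δ) ≤ A * t ^ (-δ / n) := not_lt.1 h1
    have h2' : ENNReal.ofReal |f x| ≤ rearr volume f t := not_lt.1 h2
    have h3' : ENNReal.ofReal |‖x‖ ^ β * f x| ≤ rearr volume (fun x => ‖x‖ ^ β * f x) t := not_lt.1 h3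
    rw [mem_ofPred_eq] at hx
    refine absurd hx (not_lt.2 ?_)
    refine (pointwise_bound (β := β) (a := a) (norm_pos_iff.2 h0) ha1).trans ?_
    have : 0 ≤ 1 - a := by linarith
    gcongr
  have hn' : Nonempty (Fin n) := ⟨⟨0, by omega⟩⟩
  calc _ ≤ volume ({0} ∪ (S₁ ∪ (S₂ ∪ S₃))) := measure_mono hsub
    _ ≤ volume {(0 : EuclideanSpace ℝ (Fin n))} + (volume S₁ + (volume S₂ + volume S₃)) :=
      (measure_union_le _ _).trans (add_le_add le_rfl ((measure_union_le _ _).trans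
        (add_le_add le_rfl (measure_union_le _ _))))
    _ ≤ 0 + (ENNReal.ofReal t + (ENNReal.ofReal t + ENNReal.ofReal t)) := by
      gcongr
      · simp
      · exact h t ht
      · exact distribFn_rearr t
      · exact distribFn_rearr t
    _ = ENNReal.ofReal (3 * t) := by
      rw [zero_add, ← ENNReal.ofReal_add ht.le ht.le, ← ENNReal.ofReal_add ht.le (by positivity)]
      congr 1; ring

/-- Theorem 2.1 of the paper in the Euclidean case: Caffarelli–Kohn–Nirenberg
inequalities in Lorentz norms, with unweighted gradient term. -/
theorem stmt_13 (n : ℕ) (hn : 2 ≤ n) (p r q β γ a : ℝ)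
    (hp1 : 1 < p) (hpn : p < n) (hr : 1 ≤ r) (hq : 1 ≤ q)
    (ha0 : 0 < a) (ha1 : a ≤ 1)
    (hbal : 1 / r + γ / (n : ℝ) =
      a * (1 / p - 1 / (n : ℝ)) + (1 - a) * (1 / q + β / (n : ℝ)))
    (q₁ q₂ q₃ : ℝ≥0∞) (hq₁ : 1 ≤ q₁) (hq₂ : 1 ≤ q₂) (hq₃ : 1 ≤ q₃)
    (hqrel : 1 / q₁ = ENNReal.ofReal a / q₂ + ENNReal.ofReal (1 - a) / q₃)
    (hδ0 : 0 ≤ -γ + (1 - a) * β) (hδa : -γ + (1 - a) * β ≤ a) :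
    ∃ C : ℝ, 0 < C ∧ ∀ f : EuclideanSpace ℝ (Fin n) → ℝ,
      ContDiff ℝ (⊤ : ℕ∞) f → HasCompactSupport f →
      lorentz volume (ENNReal.ofReal r) q₁ (fun x => ‖x‖ ^ γ * f x) ≤
        ENNReal.ofReal C *
          lorentz volume (ENNReal.ofReal p) q₂ (fun x => ‖gradient f x‖) ^ a *
          lorentz volume (ENNReal.ofReal q) q₃ (fun x => ‖x‖ ^ β * f x) ^ (1 - a) := by

  obtain ⟨A, hA, hprod⟩ := rearr_product n hn (β := β) (γ := γ) ha0 ha1 hδ0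
  obtain ⟨C, hC, hsob⟩ := lorentz_sobolev n hn hp1 hpn hq₂
  have hn0 : (0:ℝ) < n := by exact_mod_cast (by omega : 0 < n)
  have hr0 : 0 < r := by linarith
  have hq0 : 0 < q := by linarith
  have hp0 : 0 < p := by linarith
  have hb : 0 ≤ 1 - a := by linarith
  set δ := -γ + (1 - a) * β with hδ
  set B : ℝ := 3 ^ r⁻¹ * A with hB
  have hB0 : 0 < B := by positivity
  have hCa : C ^ a ≠ ∞ := ENNReal.rpow_ne_top_of_nonneg ha0.le hC
  refine ⟨B * ((C ^ a).toReal + 1), by positivity, fun f hf hs => ?_⟩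
  simp only [lorentz_eq_NN, ENNReal.toReal_ofReal hr0.le, ENNReal.toReal_ofReal hp0.le,
    ENNReal.toReal_ofReal hq0.le]
  set F : ℝ → ℝ≥0∞ := fun t => ENNReal.ofReal t ^ (1 / p - 1 / (n:ℝ)) * rearr volume f t with hF
  set G : ℝ → ℝ≥0∞ := fun t => ENNReal.ofReal t ^ q⁻¹ * rearr volume (fun x => ‖x‖ ^ β * f x) t with hG
  have hFm : Measurable F := by
    have := measurable_rearr (μ := volume) (f := f)
    fun_prop
  have hGm : Measurable G := by
    have := measurable_rearr (μ := volume) (f := fun x => ‖x‖ ^ β * f x)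
    fun_prop
  rw [← NN_scale (c := 3) (by norm_num)]
  have step1 : NN q₁ (fun t => ENNReal.ofReal (3 * t) ^ r⁻¹ *
      rearr volume (fun x => ‖x‖ ^ γ * f x) (3 * t)) ≤
      ENNReal.ofReal B * NN q₁ (fun t => F t ^ a * G t ^ (1 - a)) := by
    refine NN_const_mul_le hq₁ (by fun_prop) _ fun t ht => ?_
    refine (mul_le_mul_right (hprod f t ht) _).trans (le_of_eq ?_)
    simp only [hF, hG]
    rw [ENNReal.mul_rpow_of_nonneg _ _ ha0.le, ENNReal.mul_rpow_of_nonneg _ _ hb,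
      ENNReal.ofReal_rpow_of_pos (by positivity), ENNReal.ofReal_rpow_of_pos ht,
      ENNReal.ofReal_rpow_of_pos ht, ENNReal.ofReal_rpow_of_pos (by positivity),
      ENNReal.ofReal_rpow_of_pos (by positivity), mul_mul_mul_comm, ← mul_assoc, ← mul_assoc (ENNReal.ofReal B),
      ← ENNReal.ofReal_mul (by positivity), ← ENNReal.ofReal_mul (by positivity),
      ← ENNReal.ofReal_mul (by positivity)]
    congr 2
    rw [Real.mul_rpow (by norm_num) ht.le, ← Real.rpow_mul ht.le, ← Real.rpow_mul ht.le, ← Real.rpow_add ht,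
      hB, show (3:ℝ) ^ r⁻¹ * t ^ r⁻¹ * (A * t ^ (-δ / n)) = 3 ^ r⁻¹ * A * (t ^ r⁻¹ * t ^ (-δ / n)) by ring,
      ← Real.rpow_add ht]
    congr 2
    have : 1 / r = a * (1 / p - 1 / (n : ℝ)) + (1 - a) * (1 / q + β / (n : ℝ)) - γ / n := by linarith
    rw [← one_div, this, hδ]
    ring
  calc _ ≤ _ := step1
    _ ≤ ENNReal.ofReal B * (NN q₂ F ^ a * NN q₃ G ^ (1 - a)) := by
      gcongr
      exact NN_holder ha0 ha1 hq₁ hq₂ hq₃ hqrel hFm hGm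
    _ ≤ ENNReal.ofReal B * ((C * NN q₂ (fun t => ENNReal.ofReal t ^ p⁻¹ *
        rearr volume (fun x => ‖gradient f x‖) t)) ^ a * NN q₃ G ^ (1 - a)) := by
      gcongr
      exact hsob f hf hs
    _ ≤ _ := by
      rw [ENNReal.mul_rpow_of_nonneg _ _ ha0.le, ENNReal.ofReal_mul hB0.le, ← mul_assoc, ← mul_assoc]
      gcongr
      calc C ^ a = ENNReal.ofReal (C ^ a).toReal := (ENNReal.ofReal_toReal hCa).symm
        _ ≤ _ := ENNReal.ofReal_le_ofReal (by linarith)
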